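/- Fix λ > 0. The transform 𝐓 : L⁰₊ → L⁰₊ is monotone: for X₁, X₂ ∈ L⁰₊, if X₁ ≥ X₂ a.s. then 𝐓X₁ ≥ 𝐓X₂ a.s. -/

import Mathlib

/-!
A larger `X` has a smaller Laplace transform `φ_X(a) = mgf X P (-a)`, hence a larger `ψ_X`. Since
`ψ_X` is decreasing, a pointwise larger `ψ_X` has a larger inverse on `(0, ∞)`. Evaluating the
inverse at `λρ > 0` and truncating at `0` both preserve the inequality.

As the inverse is encoded as a supremum of superlevel sets, one also has to see that these sets are
nonempty and bounded above. This is the behaviour of `ψ_X` at `±∞`, which follows from the single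
estimate `ψ_X(y') ≤ e^{-a₀(y' - y)} ψ_X(y)` for `y ≤ y'`: take `y = 0` at `∞` and `y' = 0` at `-∞`.
-/

open MeasureTheory Filter Set
open scoped ENNReal

noncomputable section

variable {Ω : Type*} [MeasurableSpace Ω]

/-- Entropic risk measure `h_a(X) = (1/a) log E[e^{-aX}]`. -/
def entropic (P : Measure Ω) (a : ℝ) (X : Ω → ℝ) : ℝ :=
  (1 / a) * Real.log (∫ ω, Real.exp (-a * X ω) ∂P)

/-- Weighted entropic risk measure `h(X) = ∫_{[a₀,a₁]} h_a(X) m(da)`. -/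
def werm (P : Measure Ω) (m : Measure ℝ) (a₀ a₁ : ℝ) (X : Ω → ℝ) : ℝ :=
  ∫ a in Set.Icc a₀ a₁, entropic P a X ∂m

/-- Marginal risk density transform `h′(X) = -∫_{[a₀,a₁]} e^{-aX}/E[e^{-aX}] m(da)`. -/
def hprime (P : Measure Ω) (m : Measure ℝ) (a₀ a₁ : ℝ) (X : Ω → ℝ) (ω : Ω) : ℝ :=
  -∫ a in Set.Icc a₀ a₁, Real.exp (-a * X ω) / (∫ ω', Real.exp (-a * X ω') ∂P) ∂m

/-- Extended-real-valued expectation `E[f] = ∫ f⁺ - ∫ f⁻ ∈ [-∞,∞]`. -/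
def eint (P : Measure Ω) (f : Ω → ℝ) : EReal :=
  ((∫⁻ ω, ENNReal.ofReal (f ω) ∂P : ℝ≥0∞) : EReal)
    - ((∫⁻ ω, ENNReal.ofReal (-(f ω)) ∂P : ℝ≥0∞) : EReal)

/-- `E[ρX] ∈ [0,∞]` for a nonnegative payoff. -/
def budget (P : Measure Ω) (ρ X : Ω → ℝ) : ℝ≥0∞ := ∫⁻ ω, ENNReal.ofReal (ρ ω * X ω) ∂P

/-- `X ∈ L⁰₊`: a nonnegative random variable. -/
def Lpos (P : Measure Ω) (X : Ω → ℝ) : Prop := Measurable X ∧ ∀ᵐ ω ∂P, 0 ≤ X ω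

/-- Objective of the Lagrangian risk-minimization problem: `h(X) + λ E[ρX]`. -/
def robj (P : Measure Ω) (m : Measure ℝ) (a₀ a₁ : ℝ) (ρ : Ω → ℝ) (lam : ℝ) (X : Ω → ℝ) : EReal :=
  ((werm P m a₀ a₁ X : ℝ) : EReal) + (lam : EReal) * ((budget P ρ X : ℝ≥0∞) : EReal)

/-- `ψ_X(y) = ∫_{[a₀,a₁]} e^{-ay} / E[e^{-aX}] m(da)`. -/
def psi (P : Measure Ω) (m : Measure ℝ) (a₀ a₁ : ℝ) (X : Ω → ℝ) (y : ℝ) : ℝ :=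
  ∫ a in Set.Icc a₀ a₁, Real.exp (-a * y) / (∫ ω, Real.exp (-a * X ω) ∂P) ∂m

/-- Inverse of `ψ_X` on `(0,∞)` (realized via `sSup`, since `ψ_X` is continuous, strictly
decreasing with limits `∞` at `-∞` and `0` at `∞`). -/
def psiInv (P : Measure Ω) (m : Measure ℝ) (a₀ a₁ : ℝ) (X : Ω → ℝ) (z : ℝ) : ℝ :=
  sSup {y : ℝ | z ≤ psi P m a₀ a₁ X y}

/-- The transform `𝐓X = max(ψ_X⁻¹(λρ), 0)`. -/
def Ttrans (P : Measure Ω) (m : Measure ℝ) (a₀ a₁ lam : ℝ) (ρ : Ω → ℝ) (X : Ω → ℝ) : Ω → ℝ :=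
  fun ω => max (psiInv P m a₀ a₁ X (lam * ρ ω)) 0

/-- `X ∈ 𝒳(x)`: nonnegative and `E[ρX] ≤ x`. -/
def feasible (P : Measure Ω) (ρ : Ω → ℝ) (x : ℝ) (X : Ω → ℝ) : Prop :=
  Lpos P X ∧ budget P ρ X ≤ ENNReal.ofReal x

/-- `γ₁(x)`: the minimal value of `h` over `𝒳(x)`. -/
def gamma1 (P : Measure Ω) (m : Measure ℝ) (a₀ a₁ : ℝ) (ρ : Ω → ℝ) (x : ℝ) : ℝ :=
  sInf (werm P m a₀ a₁ '' {X | feasible P ρ x X})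

/-- Expected utility `E[U(X)] ∈ [-∞,∞]`. -/
def eutil (P : Measure Ω) (U : ℝ → ℝ) (X : Ω → ℝ) : EReal := eint P (fun ω => U (X ω))

/-- Full Lagrangian objective `E[U(X)] - μ h(X) - λ E[ρX]`. -/
def fullObj (P : Measure Ω) (m : Measure ℝ) (a₀ a₁ : ℝ) (ρ : Ω → ℝ) (U : ℝ → ℝ)
    (μ lam : ℝ) (X : Ω → ℝ) : EReal :=
  eutil P U X - ((μ * werm P m a₀ a₁ X : ℝ) : EReal)
    - (lam : EReal) * ((budget P ρ X : ℝ≥0∞) : EReal)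

open ProbabilityTheory
open scoped Topology

section Mgf

variable {μ : Measure Ω} {X : Ω → ℝ}

lemma exp_mul_le_exp_mul_add_exp_mul {l u t : ℝ} (ht : t ∈ Icc l u) (x : ℝ) :
    Real.exp (t * x) ≤ Real.exp (l * x) + Real.exp (u * x) := by
  rcases le_total 0 x with hx | hx
  · exact (Real.exp_le_exp.2 (mul_le_mul_of_nonneg_right ht.2 hx)).trans
      (le_add_of_nonneg_left (Real.exp_pos _).le)
  · exact (Real.exp_le_exp.2 (mul_le_mul_of_nonpos_right ht.1 hx)).trans
      (le_add_of_nonneg_right (Real.exp_pos _).le)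

/-- Unlike `continuousOn_mgf`, this reaches the boundary of `integrableExpSet X μ`. -/
lemma continuousOn_mgf_Icc {l u : ℝ} (hX : Icc l u ⊆ integrableExpSet X μ) :
    ContinuousOn (mgf X μ) (Icc l u) := by
  rcases lt_or_ge u l with hul | hlu
  · simp [Icc_eq_empty_of_lt hul]
  refine continuousOn_of_dominated
    (bound := fun ω => Real.exp (l * X ω) + Real.exp (u * X ω))
    (fun t ht => (hX ht).aestronglyMeasurable) (fun t ht => ae_of_all _ fun ω => ?_)
    (Integrable.add (hX (left_mem_Icc.2 hlu)) (hX (right_mem_Icc.2 hlu)))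
    (ae_of_all _ fun ω => by fun_prop)
  rw [Real.norm_of_nonneg (Real.exp_pos _).le]
  exact exp_mul_le_exp_mul_add_exp_mul ht (X ω)

lemma integrable_exp_neg_mul_of_nonneg [IsFiniteMeasure μ] (hX : AEMeasurable X μ)
    (hX0 : ∀ᵐ ω ∂μ, 0 ≤ X ω) {a : ℝ} (ha : 0 ≤ a) :
    Integrable (fun ω => Real.exp (-a * X ω)) μ := by
  simpa using integrable_exp_mul_of_le a 0 ha hX.neg (hX0.mono fun ω hω => neg_nonpos.2 hω)

end Mgf

section Psi

variable {P : Measure Ω} [NeZero P] {m : Measure ℝ} [IsFiniteMeasureOnCompacts m]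
  {a₀ a₁ : ℝ} {X Y : Ω → ℝ}

lemma integrableOn_exp_div_mgf (hX : ∀ a ∈ Icc a₀ a₁, Integrable (fun ω => Real.exp (-a * X ω)) P)
    (y : ℝ) : IntegrableOn (fun a => Real.exp (-a * y) / mgf X P (-a)) (Icc a₀ a₁) m := by
  have hmaps : MapsTo Neg.neg (Icc a₀ a₁) (Icc (-a₁) (-a₀)) :=
    fun a ha => ⟨neg_le_neg ha.2, neg_le_neg ha.1⟩
  have hφ : ContinuousOn (fun a => mgf X P (-a)) (Icc a₀ a₁) := by
    refine (continuousOn_mgf_Icc fun t ht => ?_).comp continuousOn_neg hmaps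
    simpa [integrableExpSet] using hX (-t) ⟨le_neg.2 ht.2, neg_le.2 ht.1⟩
  refine ContinuousOn.integrableOn_Icc (ContinuousOn.div (by fun_prop) hφ fun a ha => ?_)
  exact (mgf_pos' (NeZero.ne P) (hX a ha)).ne'

lemma psi_mono (ha₀ : 0 ≤ a₀)
    (hX : ∀ a ∈ Icc a₀ a₁, Integrable (fun ω => Real.exp (-a * X ω)) P)
    (hY : ∀ a ∈ Icc a₀ a₁, Integrable (fun ω => Real.exp (-a * Y ω)) P)
    (hXY : X ≤ᵐ[P] Y) (y : ℝ) : psi P m a₀ a₁ X y ≤ psi P m a₀ a₁ Y y := by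
  refine setIntegral_mono_on (integrableOn_exp_div_mgf hX y) (integrableOn_exp_div_mgf hY y)
    measurableSet_Icc fun a ha => ?_
  have hφ : mgf Y P (-a) ≤ mgf X P (-a) :=
    mgf_anti_of_nonpos hXY (neg_nonpos.2 (ha₀.trans ha.1)) (hX a ha)
  exact div_le_div_of_nonneg_left (Real.exp_pos _).le (mgf_pos' (NeZero.ne P) (hY a ha)) hφ

lemma psi_pos (hm : m (Icc a₀ a₁) ≠ 0)
    (hX : ∀ a ∈ Icc a₀ a₁, Integrable (fun ω => Real.exp (-a * X ω)) P) (y : ℝ) :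
    0 < psi P m a₀ a₁ X y := by
  have hpos : ∀ a ∈ Icc a₀ a₁, 0 < Real.exp (-a * y) / mgf X P (-a) :=
    fun a ha => div_pos (Real.exp_pos _) (mgf_pos' (NeZero.ne P) (hX a ha))
  refine (setIntegral_pos_iff_support_of_nonneg_ae
    (ae_restrict_of_forall_mem measurableSet_Icc fun a ha => (hpos a ha).le)
    (integrableOn_exp_div_mgf hX y)).2 ?_
  exact hm.pos.trans_le (measure_mono fun a ha => ⟨(hpos a ha).ne', ha⟩)

lemma psi_le_exp_mul_psi
    (hX : ∀ a ∈ Icc a₀ a₁, Integrable (fun ω => Real.exp (-a * X ω)) P) {y y' : ℝ} (hy : y ≤ y') :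
    psi P m a₀ a₁ X y' ≤ Real.exp (-a₀ * (y' - y)) * psi P m a₀ a₁ X y := by
  unfold psi
  rw [← integral_const_mul]
  refine setIntegral_mono_on (integrableOn_exp_div_mgf hX y')
    ((integrableOn_exp_div_mgf hX y).const_mul _) measurableSet_Icc fun a ha => ?_
  rw [← mul_div_assoc, ← Real.exp_add]
  have hexp : -a * y' ≤ -a₀ * (y' - y) + -a * y := by
    linarith [mul_le_mul_of_nonneg_right ha.1 (sub_nonneg.2 hy)]
  exact div_le_div_of_nonneg_right (Real.exp_le_exp.2 hexp) mgf_nonneg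

lemma tendsto_psi_atTop (ha₀ : 0 < a₀)
    (hX : ∀ a ∈ Icc a₀ a₁, Integrable (fun ω => Real.exp (-a * X ω)) P) :
    Tendsto (psi P m a₀ a₁ X) atTop (𝓝 0) := by
  have hexp : Tendsto (fun y => Real.exp (-a₀ * y)) atTop (𝓝 0) :=
    Real.tendsto_exp_atBot.comp (tendsto_id.const_mul_atTop_of_neg (neg_lt_zero.2 ha₀))
  have hbound : Tendsto (fun y => Real.exp (-a₀ * y) * psi P m a₀ a₁ X 0) atTop (𝓝 0) := by
    simpa using hexp.mul_const (psi P m a₀ a₁ X 0)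
  refine squeeze_zero' (Eventually.of_forall fun y => ?_) ?_ hbound
  · exact integral_nonneg fun a => div_nonneg (Real.exp_pos _).le mgf_nonneg
  · filter_upwards [eventually_ge_atTop 0] with y hy
    simpa using psi_le_exp_mul_psi (m := m) hX hy

lemma tendsto_psi_atBot (ha₀ : 0 < a₀) (hm : m (Icc a₀ a₁) ≠ 0)
    (hX : ∀ a ∈ Icc a₀ a₁, Integrable (fun ω => Real.exp (-a * X ω)) P) :
    Tendsto (psi P m a₀ a₁ X) atBot atTop := by
  have hexp : Tendsto (fun y => Real.exp (-a₀ * y)) atBot atTop :=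
    Real.tendsto_exp_atTop.comp (tendsto_id.const_mul_atBot_of_neg (neg_lt_zero.2 ha₀))
  refine tendsto_atTop_mono' atBot ?_ (hexp.atTop_mul_const (psi_pos hm hX 0))
  filter_upwards [eventually_le_atBot 0] with y hy
  calc Real.exp (-a₀ * y) * psi P m a₀ a₁ X 0
      ≤ Real.exp (-a₀ * y) * (Real.exp (-a₀ * (0 - y)) * psi P m a₀ a₁ X y) :=
        mul_le_mul_of_nonneg_left (psi_le_exp_mul_psi hX hy) (Real.exp_pos _).le
    _ = psi P m a₀ a₁ X y := by rw [← mul_assoc, ← Real.exp_add]; simp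

lemma bddAbove_setOf_le_psi (ha₀ : 0 < a₀)
    (hX : ∀ a ∈ Icc a₀ a₁, Integrable (fun ω => Real.exp (-a * X ω)) P) {z : ℝ} (hz : 0 < z) :
    BddAbove {y | z ≤ psi P m a₀ a₁ X y} := by
  obtain ⟨b, hb⟩ := eventually_atTop.1 ((tendsto_psi_atTop (m := m) ha₀ hX).eventually_lt_const hz)
  exact ⟨b, fun y hy => le_of_not_ge fun hby => (hb y hby).not_ge hy⟩

lemma psiInv_mono (ha₀ : 0 < a₀) (hm : m (Icc a₀ a₁) ≠ 0)
    (hX : ∀ a ∈ Icc a₀ a₁, Integrable (fun ω => Real.exp (-a * X ω)) P)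
    (hY : ∀ a ∈ Icc a₀ a₁, Integrable (fun ω => Real.exp (-a * Y ω)) P)
    (hXY : X ≤ᵐ[P] Y) {z : ℝ} (hz : 0 < z) :
    psiInv P m a₀ a₁ X z ≤ psiInv P m a₀ a₁ Y z :=
  csSup_le_csSup (bddAbove_setOf_le_psi ha₀ hY hz)
    ((tendsto_psi_atBot ha₀ hm hX).eventually_ge_atTop z).exists
    fun y hy => le_trans hy (psi_mono ha₀.le hX hY hXY y)

theorem Ttrans_monotone_general (ha₀ : 0 < a₀) (hm : m (Icc a₀ a₁) ≠ 0)
    {ρ : Ω → ℝ} (hρ : ∀ᵐ ω ∂P, 0 < ρ ω) {lam : ℝ} (hlam : 0 < lam)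
    (hX : ∀ a ∈ Icc a₀ a₁, Integrable (fun ω => Real.exp (-a * X ω)) P)
    (hY : ∀ a ∈ Icc a₀ a₁, Integrable (fun ω => Real.exp (-a * Y ω)) P) (hXY : X ≤ᵐ[P] Y) :
    ∀ᵐ ω ∂P, Ttrans P m a₀ a₁ lam ρ X ω ≤ Ttrans P m a₀ a₁ lam ρ Y ω := by
  filter_upwards [hρ] with ω hω
  exact max_le_max_right 0 (psiInv_mono ha₀ hm hX hY hXY (mul_pos hlam hω))

end Psi

/-- the transform `𝐓X = max(ψ_X⁻¹(λρ), 0)` is monotone on `L⁰₊`: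
if `X₁ ≥ X₂` a.s. then `𝐓X₁ ≥ 𝐓X₂` a.s. -/
theorem Ttrans_monotone (P : Measure Ω) [IsProbabilityMeasure P]
    (a₀ a₁ : ℝ) (ha₀ : 0 < a₀) (ha₀₁ : a₀ < a₁)
    (m : Measure ℝ) [IsProbabilityMeasure m] (hm : m (Set.Icc a₀ a₁) = 1)
    (ρ : Ω → ℝ) (hmρ : Measurable ρ) (hρ0 : ∀ᵐ ω ∂P, 0 < ρ ω) (hρint : Integrable ρ P)
    (lam : ℝ) (hlam : 0 < lam)
    (X₁ X₂ : Ω → ℝ) (hX₁ : Lpos P X₁) (hX₂ : Lpos P X₂)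
    (hle : ∀ᵐ ω ∂P, X₂ ω ≤ X₁ ω) :
    ∀ᵐ ω ∂P, Ttrans P m a₀ a₁ lam ρ X₂ ω ≤ Ttrans P m a₀ a₁ lam ρ X₁ ω := by
  exact Ttrans_monotone_general ha₀ (by simp [hm]) hρ0 hlam
    (fun _ ha => integrable_exp_neg_mul_of_nonneg hX₂.1.aemeasurable hX₂.2 (ha₀.le.trans ha.1))
    (fun _ ha => integrable_exp_neg_mul_of_nonneg hX₁.1.aemeasurable hX₁.2 (ha₀.le.trans ha.1)) hle
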